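/- (Definition/Proposition 3.12 (ii), combined with the descent of 3.12 (i)) Let m be a positive integer, k a finite field of cardinality q and characteristic p, K a function field of one variable over k, and Σ a k-large set of prime numbers. Let f, g ∈ K ∖ k. Assume that for all but finitely many places O of K with f ∈ O and g ∈ O, there exist nonzero elements a, c of an algebraic closure of the residue field κ(O), both of Σ'-primary order, such that f(O) = a·(1 + c·g(O))^m holds in that algebraic closure. Then there exist a, c ∈ k^× of Σ'-primary order such that f = a·(1 + c·g)^m in K. -/

import Mathlib

/-- A torsion element of a monoid whose (finite) order has all of its prime divisors
outside `S`; for `S' = Primes ∖ S` this says the element has `S'`-primary order. -/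
def PrimaryOutside (S : Set ℕ) {M : Type*} [Monoid M] (x : M) : Prop :=
  IsOfFinOrder x ∧ ∀ ℓ : ℕ, ℓ.Prime → ℓ ∣ orderOf x → ℓ ∉ S

/-- `S` is `k`-small, for `k` a finite field of cardinality `q` and characteristic `p`. -/
def IsSmallFor (q p : ℕ) (S : Set ℕ) : Prop :=
  ∃ ℓ₀ N₀ : ℕ, ℓ₀.Prime ∧ ∀ ℓ ∈ S, ℓ.Prime → ℓ ≠ p → ∀ j : ℕ, 1 ≤ j →
    ¬ ℓ₀ ^ N₀ ∣ orderOf ((q : ZMod (ℓ ^ j)))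

/-- `S` is `k`-large if the complementary set of primes is `k`-small. -/
def IsLargeFor (q p : ℕ) (S : Set ℕ) : Prop :=
  IsSmallFor q p {ℓ : ℕ | ℓ.Prime ∧ ℓ ∉ S}

/-- `K` is a function field of one variable over the field `k`. -/
def IsFunctionFieldOneVar (k K : Type*) [Field k] [Field K] [Algebra k K] : Prop :=
  (∃ t : K, Transcendental k t ∧
    FiniteDimensional (IntermediateField.adjoin k {t}) K) ∧
  ∀ x : K, IsAlgebraic k x → x ∈ (algebraMap k K).range


open Polynomial in
theorem aux_pow_dvd_lcm {l : ℕ} (hl : l.Prime) {a b n : ℕ} (ha : a ≠ 0) (hb : b ≠ 0)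
    (h : l ^ n ∣ a.lcm b) : l ^ n ∣ a ∨ l ^ n ∣ b := by
  have hab : a.lcm b ≠ 0 := Nat.lcm_ne_zero ha hb
  rw [hl.pow_dvd_iff_le_factorization hab, Nat.factorization_lcm ha hb] at h
  rw [hl.pow_dvd_iff_le_factorization ha, hl.pow_dvd_iff_le_factorization hb]
  simpa using h

theorem aux_orderOf_pos {q n : ℕ} (hn : n ≠ 0) (h : q.Coprime n) :
    0 < orderOf (q : ZMod n) := by
  have : NeZero n := ⟨hn⟩
  rw [orderOf_pos_iff]
  have := isOfFinOrder_of_finite (ZMod.unitOfCoprime q h)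
  have h2 := (Units.coeHom (ZMod n)).isOfFinOrder this
  simpa using h2

theorem aux_small {q p : ℕ} {T : Set ℕ} {l N : ℕ} (hl : l.Prime)
    (hT : ∀ ℓ ∈ T, ℓ.Prime → ℓ ≠ p → ∀ j : ℕ, 1 ≤ j → ¬ l ^ N ∣ orderOf ((q : ZMod (ℓ ^ j))))
    (hN : N ≠ 0) (n : ℕ) : n ≠ 0 → q.Coprime n →
    (∀ ℓ : ℕ, ℓ.Prime → ℓ ∣ n → ℓ ∈ T ∧ ℓ ≠ p) → ¬ l ^ N ∣ orderOf (q : ZMod n) := by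
  induction n using Nat.recOnPosPrimePosCoprime with
  | prime_pow r j hr hj =>
    intro _ _ h
    obtain ⟨h1, h2⟩ := h r hr (dvd_pow_self r hj.ne')
    exact hT r h1 hr h2 j hj
  | zero => intro h; exact absurd rfl h
  | one =>
    intro _ _ _ h
    have : orderOf ((q : ℕ) : ZMod 1) = 1 := by
      rw [orderOf_eq_one_iff]; exact Subsingleton.elim _ _
    rw [this] at h
    have := Nat.eq_one_of_dvd_one h
    rw [Nat.pow_eq_one] at this
    rcases this with h | h
    · exact hl.one_lt.ne' h
    · exact hN h
  | coprime a b ha hb hab iha ihb =>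
    intro h0 hq h hd
    have h1 : orderOf ((q : ℕ) : ZMod (a * b)) =
        (orderOf ((q : ℕ) : ZMod a)).lcm (orderOf ((q : ℕ) : ZMod b)) := by
      rw [← (ZMod.chineseRemainder hab).toMulEquiv.orderOf_eq]
      rw [Prod.orderOf]
      simp
    rw [h1] at hd
    have qa := Nat.Coprime.coprime_mul_right_right hq
    have qb := Nat.Coprime.coprime_mul_left_right hq
    rcases aux_pow_dvd_lcm hl (aux_orderOf_pos (by omega) qa).ne'
      (aux_orderOf_pos (by omega) qb).ne' hd with h2 | h2
    · exact iha (by omega) qa (fun r hr hra => h r hr (hra.mul_right b)) h2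
    · exact ihb (by omega) qb (fun r hr hra => h r hr (hra.mul_left a)) h2

/-- an element of `S'`-primary order is periodic under Frobenius, of period not divisible by `l^N`. -/
theorem aux_period {k E : Type*} [Field k] [Fintype k] [Field E] [Algebra k E]
    {p q l N : ℕ} (hp : p.Prime) [CharP k p] (hq : q = Fintype.card k) {S : Set ℕ} (hl : l.Prime)
    (hT : ∀ ℓ ∈ {ℓ : ℕ | ℓ.Prime ∧ ℓ ∉ S}, ℓ.Prime → ℓ ≠ p → ∀ j : ℕ, 1 ≤ j →
      ¬ l ^ N ∣ orderOf ((q : ZMod (ℓ ^ j))))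
    (hN : N ≠ 0) (a : E) (ha : PrimaryOutside S a) :
    ∃ r, 0 < r ∧ ¬ l ^ N ∣ r ∧ Function.IsPeriodicPt (FiniteField.frobeniusAlgHom k E) r a := by
  obtain ⟨hfin, ha⟩ := ha
  have : Fact p.Prime := ⟨hp⟩
  have : CharP E p := charP_of_injective_algebraMap (algebraMap k E).injective p
  have hn : orderOf a ≠ 0 := (orderOf_pos_iff.2 hfin).ne'
  have hpn : ¬ p ∣ orderOf a := by
    rintro ⟨t, ht⟩
    have h1 : (a ^ t) ^ p = 1 := by rw [← pow_mul, mul_comm, ← ht, pow_orderOf_eq_one]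
    have h2 : a ^ t = 1 := by
      have : frobenius E p (a ^ t) = frobenius E p 1 := by simpa [frobenius_def] using h1
      exact frobenius_inj E p this
    have h3 := orderOf_dvd_of_pow_eq_one h2
    have h4 : 0 < t := by
      rcases Nat.eq_zero_or_pos t with h | h
      · rw [h, mul_zero] at ht; exact absurd ht hn
      · exact h
    have := Nat.le_of_dvd h4 h3
    have := hp.two_le
    nlinarith
  obtain ⟨s, -, hs⟩ := FiniteField.card k p
  have hqn : q.Coprime (orderOf a) := by
    rw [hq, hs]
    exact Nat.Coprime.pow_left _ ((Nat.Prime.coprime_iff_not_dvd hp).2 hpn)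
  refine ⟨orderOf (q : ZMod (orderOf a)), aux_orderOf_pos hn hqn,
    aux_small hl hT hN _ hn hqn ?_, ?_⟩
  · intro r hr hra
    exact ⟨⟨hr, ha r hr hra⟩, fun h => hpn (h ▸ hra)⟩
  · have h := pow_orderOf_eq_one (q : ZMod (orderOf a))
    set r := orderOf (q : ZMod (orderOf a))
    unfold Function.IsPeriodicPt Function.IsFixedPt
    rw [FiniteField.coe_frobeniusAlgHom, pow_iterate, ← hq]
    have h2 : q ^ r ≡ 1 [MOD orderOf a] := by
      rw [← ZMod.natCast_eq_natCast_iff]; simpa using h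
    have hqr : 1 ≤ q ^ r := Nat.one_le_pow _ _ (hq ▸ Fintype.card_pos)
    have h3 : orderOf a ∣ q ^ r - 1 := (Nat.modEq_iff_dvd' hqr).1 h2.symm
    have h4 : q ^ r = (q ^ r - 1) + 1 := by omega
    change a ^ (q ^ r) = a
    rw [h4, pow_succ, orderOf_dvd_iff_pow_eq_one.1 h3, one_mul]

theorem aux_poly_unique {E : Type*} [Field E] {m : ℕ} (hm : 0 < m) {a c a' c' : E}
    (ha : a ≠ 0) (hc : c ≠ 0)
    (h : ∀ x : E, a * (1 + c * x) ^ m = a' * (1 + c' * x) ^ m) : a' = a ∧ c' = c := by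
  have h0 : a = a' := by simpa using h 0
  subst h0
  refine ⟨rfl, ?_⟩
  have h1 := h (-c⁻¹)
  have h2 : 1 + c * -c⁻¹ = 0 := by field_simp; ring
  rw [h2, zero_pow hm.ne', mul_zero, eq_comm, mul_eq_zero, or_iff_right ha] at h1
  have h3 := pow_eq_zero_iff hm.ne' |>.1 h1
  field_simp at h3
  linear_combination -h3

open Polynomial in
/-- The core finite field argument. -/
theorem aux_core {k E : Type*} [Field k] [Fintype k] [Field E] [Algebra k E]
    {m d l N M r : ℕ} (hm : 0 < m) (hl : l.Prime)
    (β a c : E) (ha0 : a ≠ 0) (hc0 : c ≠ 0)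
    (hβ : Function.minimalPeriod (FiniteField.frobeniusAlgHom k E) β = l ^ M)
    (hr : 0 < r) (hlr : ¬ l ^ N ∣ r)
    (ha : Function.IsPeriodicPt (FiniteField.frobeniusAlgHom k E) r a)
    (hc : Function.IsPeriodicPt (FiniteField.frobeniusAlgHom k E) r c)
    (hM : m * l ^ N < l ^ M)
    (F : E[X]) (hF0 : F ≠ 0) (hFd : F.natDegree ≤ d)
    (hF : ∀ i, Function.IsPeriodicPt (FiniteField.frobeniusAlgHom k E) (l ^ M) (F.coeff i))
    (hroot : F.IsRoot (a * (1 + c * β) ^ m)) :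
    Function.IsPeriodicPt (FiniteField.frobeniusAlgHom k E) (l ^ N * d.factorial) a ∧
    Function.IsPeriodicPt (FiniteField.frobeniusAlgHom k E) (l ^ N * d.factorial) c := by
  set Φ := FiniteField.frobeniusAlgHom k E with hΦ
  have hit : ∀ n : ℕ, ∀ x, (Φ^[n]) x = (Φ ^ n) x := fun n x => by rw [AlgHom.coe_pow]
  set φ := a * (1 + c * β) ^ m with hφ
  -- step 1: φ is periodic
  have h1 : Function.IsPeriodicPt Φ (l ^ M * d.factorial) φ := by
    set Ψ : E →ₐ[k] E := Φ ^ (l ^ M) with hΨ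
    have hroots : ∀ n : ℕ, F.IsRoot (Ψ^[n] φ) := by
      intro n
      induction n with
      | zero => simpa using hroot
      | succ n ih =>
        rw [Function.iterate_succ_apply']
        have hFF : F.map (Ψ : E →+* E) = F := by
          ext i
          rw [coeff_map]
          have := hF i
          rw [Function.IsPeriodicPt, Function.IsFixedPt, hit] at this
          exact this
        rw [← hFF]
        exact IsRoot.map (f := (Ψ : E →+* E)) ih
    have hinj : Function.Injective Ψ := Ψ.toRingHom.injective
    -- pigeonhole
    obtain ⟨i, hi, j, hj, hij, he⟩ : ∃ i ∈ Finset.range (d + 1), ∃ j ∈ Finset.range (d + 1),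
        i ≠ j ∧ Ψ^[i] φ = Ψ^[j] φ := by
      classical
      apply Finset.exists_ne_map_eq_of_card_lt_of_maps_to (t := F.roots.toFinset)
      · rw [Finset.card_range]
        have := F.card_roots'
        have := F.roots.toFinset_card_le
        omega
      · intro n hn
        simp only [Finset.mem_coe, Multiset.mem_toFinset, mem_roots', ne_eq]
        exact ⟨hF0, hroots n⟩
    have key : ∀ i j : ℕ, i < j → j ≤ d → Ψ^[i] φ = Ψ^[j] φ →
        Function.IsPeriodicPt Ψ d.factorial φ := by
      intro i j hij hjd he
      have h2 : Function.IsPeriodicPt Ψ (j - i) φ := by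
        have : j = i + (j - i) := by omega
        rw [this, Function.iterate_add_apply] at he
        exact (hinj.iterate i he).symm
      exact h2.trans_dvd (Nat.dvd_factorial (by omega) (by omega))
    have h3 : Function.IsPeriodicPt Ψ d.factorial φ := by
      simp only [Finset.mem_range] at hi hj
      rcases lt_or_gt_of_ne hij with h | h
      · exact key i j h (by omega) he
      · exact key j i h (by omega) he.symm
    rw [Function.IsPeriodicPt, Function.IsFixedPt, hΨ, AlgHom.coe_pow, ← Function.iterate_mul] at h3
    exact h3
  have hβp : Function.IsPeriodicPt Φ (l ^ M) β := hβ ▸ Function.isPeriodicPt_minimalPeriod Φ β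
  have h2 : Function.IsPeriodicPt Φ (l ^ M * d.factorial) β := hβp.mul_const _
  set s := l ^ M * d.factorial with hs
  set a' := (Φ ^ s) a with ha'
  set c' := (Φ ^ s) c with hc'
  have e1 : a' * (1 + c' * β) ^ m = φ := by
    have h3 : (Φ ^ s) φ = φ := by rw [← hit]; exact h1
    have h4 : (Φ ^ s) β = β := by rw [← hit]; exact h2
    conv_rhs => rw [← h3]
    rw [hφ]
    simp only [map_mul, map_pow, map_add, map_one, h4, ha', hc']
  have hcomm : ∀ x, (Φ ^ r) ((Φ ^ s) x) = (Φ ^ s) ((Φ ^ r) x) := fun x => by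
    rw [← AlgHom.mul_apply, ← AlgHom.mul_apply, ← pow_add, ← pow_add, add_comm]
  have fa : (Φ ^ r) a = a := by rw [← hit]; exact ha
  have fc : (Φ ^ r) c = c := by rw [← hit]; exact hc
  have fa' : (Φ ^ r) a' = a' := by rw [ha', hcomm, fa]
  have fc' : (Φ ^ r) c' = c' := by rw [hc', hcomm, fc]
  -- polynomial difference
  set G : E[X] := C a' * (1 + C c' * X) ^ m - C a * (1 + C c * X) ^ m with hG
  have hGdeg : G.natDegree ≤ m := by
    have : ∀ u v : E, (C u * (1 + C v * X) ^ m).natDegree ≤ m := by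
      intro u v
      refine (natDegree_C_mul_le _ _).trans ?_
      refine natDegree_pow_le.trans ?_
      have : (1 + C v * X : E[X]).natDegree ≤ 1 := by
        compute_degree
      nlinarith
    exact (natDegree_sub_le_of_le (this _ _) (this _ _)).trans (by simp)
  have hGroots : ∀ n : ℕ, G.IsRoot ((Φ^[r])^[n] β) := by
    intro n
    induction n with
    | zero =>
      simp only [Function.iterate_zero, id, IsRoot.def, hG]
      simp only [eval_sub, eval_mul, eval_C, eval_pow, eval_add, eval_one, eval_X]
      rw [e1, hφ, sub_self]
    | succ n ih =>
      rw [Function.iterate_succ_apply', hit]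
      have hGG : G.map ((Φ ^ r : E →ₐ[k] E) : E →+* E) = G := by
        simp [hG, fa, fc, fa', fc', Polynomial.map_pow]
      rw [← hGG]
      exact IsRoot.map (f := ((Φ ^ r : E →ₐ[k] E) : E →+* E)) ih
  obtain ⟨i, hiM, hi⟩ := (Nat.dvd_prime_pow hl).1 (Nat.gcd_dvd_left (l ^ M) r)
  have hiN : i < N := by
    by_contra hcon
    apply hlr
    exact (pow_dvd_pow l (not_lt.1 hcon)).trans (hi ▸ Nat.gcd_dvd_right (l ^ M) r)
  have hG0 : G = 0 := by
    by_contra hne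
    have hper := Function.minimalPeriod_iterate_eq_div_gcd (f := Φ) (x := β) hr.ne'
    rw [hβ, hi] at hper
    have hbig : m < l ^ M / l ^ i := by
      rw [Nat.lt_div_iff_mul_lt' (pow_dvd_pow l hiM)]
      calc _ ≤ m * l ^ N := by
            rw [mul_comm]
            exact Nat.mul_le_mul_left _ (Nat.pow_le_pow_right hl.pos hiN.le)
        _ < _ := hM
    rw [← hper] at hbig
    classical
    have hinj := Function.iterate_injOn_Iio_minimalPeriod (f := Φ^[r]) (x := β)
    have hle : (Finset.range (Function.minimalPeriod (Φ^[r]) β)).card ≤ G.roots.toFinset.card := by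
      apply Finset.card_le_card_of_injOn (fun n => (Φ^[r])^[n] β)
      · intro n hn
        simp only [Finset.mem_coe, Multiset.mem_toFinset, mem_roots', ne_eq]
        exact ⟨hne, hGroots n⟩
      · intro x hx y hy hxy
        exact hinj (by simpa using hx) (by simpa using hy) hxy
    rw [Finset.card_range] at hle
    have := G.card_roots'
    have := G.roots.toFinset_card_le
    omega
  have hu := aux_poly_unique (a := a) (c := c) (a' := a') (c' := c') hm ha0 hc0 (by
    intro x
    have : G.eval x = 0 := by rw [hG0]; simp
    simp only [hG, eval_sub, eval_mul, eval_C, eval_pow, eval_add, eval_one, eval_X] at this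
    exact (sub_eq_zero.1 this).symm)
  have hdvd : Nat.gcd s r ∣ l ^ N * d.factorial := by
    refine (Nat.gcd_mul_left_dvd_mul_gcd _ _ _).trans ?_
    exact Nat.mul_dvd_mul (hi ▸ pow_dvd_pow l hiN.le) (Nat.gcd_dvd_left _ _)
  refine ⟨(Function.IsPeriodicPt.gcd (m := s) ?_ ha).trans_dvd hdvd,
    (Function.IsPeriodicPt.gcd (m := s) ?_ hc).trans_dvd hdvd⟩
  · rw [Function.IsPeriodicPt, Function.IsFixedPt, hit]; exact hu.1
  · rw [Function.IsPeriodicPt, Function.IsFixedPt, hit]; exact hu.2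

theorem aux_primary_iff {S : Set ℕ} {A B : Type*} [Monoid A] [Monoid B] (φ : A →* B)
    (hφ : Function.Injective φ) (x : A) : PrimaryOutside S (φ x) ↔ PrimaryOutside S x := by
  unfold PrimaryOutside
  rw [orderOf_injective φ hφ, ← orderOf_pos_iff, ← orderOf_pos_iff, orderOf_injective φ hφ]

open Polynomial in
theorem aux_exists_irreducible (k : Type) [Field k] [Fintype k] (n : ℕ) (hn : n ≠ 0) :
    ∃ P : k[X], Irreducible P ∧ P.natDegree = n := by
  obtain ⟨p, hp⟩ := CharP.exists k
  have : Fact p.Prime := ⟨CharP.char_is_prime k p⟩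
  have : NeZero n := ⟨hn⟩
  have hfr := FiniteField.finrank_extension k p n
  have : FiniteDimensional k (FiniteField.Extension k p n) :=
    Module.finite_of_finrank_pos (by omega)
  obtain ⟨α, hα⟩ := Field.exists_primitive_element k (FiniteField.Extension k p n)
  refine ⟨minpoly k α, minpoly.irreducible (IsIntegral.of_finite k α), ?_⟩
  exact ((Field.primitive_element_iff_minpoly_natDegree_eq k α).1 hα).trans hfr

open Polynomial in
theorem aux_minimalPeriod {k E : Type*} [Field k] [Fintype k] [Field E] [Algebra k E]
    {P : k[X]} (hP : Irreducible P) {β : E} (hβ : aeval β P = 0) :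
    Function.minimalPeriod (FiniteField.frobeniusAlgHom k E) β = P.natDegree := by
  have key : ∀ n, Function.IsPeriodicPt (FiniteField.frobeniusAlgHom k E) n β ↔
      P.natDegree ∣ n := by
    intro n
    rw [hP.natDegree_dvd_iff_dvd_X_pow_card_pow_sub_X, ← hP.dvd_iff_aeval_eq_zero hβ,
      Function.IsPeriodicPt, Function.IsFixedPt, FiniteField.coe_frobeniusAlgHom, pow_iterate]
    simp [sub_eq_zero, Nat.card_eq_fintype_card]
  apply Nat.dvd_antisymm
  · exact ((key _).2 dvd_rfl).minimalPeriod_dvd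
  · exact (key _).1 (Function.isPeriodicPt_minimalPeriod _ _)

open Polynomial in
theorem aux_exists_place {k K : Type*} [Field k] [Field K] [Algebra k K] {g : K}
    (hg : Transcendental k g) {P : k[X]} (hP : Irreducible P) :
    ∃ O : ValuationSubring K, (∀ c : k, algebraMap k K c ∈ O) ∧ g ∈ O ∧
      aeval g P ∈ O.nonunits := by
  let A : Subring K := (aeval g : k[X] →ₐ[k] K).toRingHom.range
  have hinj : Function.Injective (aeval g : k[X] →ₐ[k] K) :=
    transcendental_iff_injective.1 hg
  let y : A := ⟨aeval g P, P, rfl⟩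
  have hI : Ideal.span {y} ≠ ⊤ := by
    rw [Ne, Ideal.span_singleton_eq_top]
    intro hu
    obtain ⟨⟨_, z, rfl⟩, hz⟩ := isUnit_iff_exists_inv.1 hu
    have h1 : aeval g P * aeval g z = 1 := congrArg Subtype.val hz
    have h2 : P * z = 1 := hinj (by simpa using h1)
    exact hP.not_isUnit (IsUnit.of_mul_eq_one _ h2)
  obtain ⟨O, hAO, hO⟩ := Ideal.image_subset_nonunits_valuationSubring _ hI
  refine ⟨O, fun c => hAO ⟨C c, by simp⟩, hAO ⟨X, by simp⟩, ?_⟩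
  exact hO ⟨y, Ideal.subset_span rfl, rfl⟩

open Polynomial in
theorem aux_place_coprime {k K : Type*} [Field k] [Field K] [Algebra k K] {g : K}
    {P Q : k[X]} (hPQ : IsCoprime P Q) (O : ValuationSubring K)
    (hk : ∀ c : k, algebraMap k K c ∈ O) (hg : g ∈ O) (hP : aeval g P ∈ O.nonunits) :
    aeval g Q ∉ O.nonunits := by
  intro hQ
  have hmem : ∀ R : k[X], aeval g R ∈ O := by
    intro R
    rw [aeval_eq_sum_range]
    refine sum_mem fun i _ => ?_
    rw [Algebra.smul_def]
    exact mul_mem (hk _) (pow_mem hg _)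
  obtain ⟨u, v, huv⟩ := hPQ
  have h1 := congrArg (aeval g) huv
  simp only [map_add, map_mul, map_one] at h1
  rw [ValuationSubring.mem_nonunits_iff] at hP hQ
  have hu := (O.valuation_le_one_iff _).2 (hmem u)
  have hv := (O.valuation_le_one_iff _).2 (hmem v)
  have : O.valuation (aeval g u * aeval g P + aeval g v * aeval g Q) < 1 := by
    apply Valuation.map_add_lt
    · rw [map_mul]; exact mul_lt_one_of_nonneg_of_lt_one_right hu zero_le hP
    · rw [map_mul]; exact mul_lt_one_of_nonneg_of_lt_one_right hv zero_le hQ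
  rw [h1, map_one] at this
  exact lt_irrefl _ this

open Polynomial IntermediateField in
open scoped IntermediateField.algebraAdjoinAdjoin in
theorem aux_exists_F {k K : Type*} [Field k] [Field K] [Algebra k K] {g : K}
    (f : K) [Algebra.IsAlgebraic k⟮g⟯ K] :
    ∃ F : k[X][X], F.eval₂ (aeval g : k[X] →ₐ[k] K).toRingHom f = 0 ∧ F ≠ 0 ∧
      ∀ y : AlgebraicClosure K,
        F.eval₂ ((algebraMap K (AlgebraicClosure K)).comp (aeval g : k[X] →ₐ[k] K).toRingHom) y = 0 →
        aeval y (minpoly k⟮g⟯ f) = 0 := by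
  obtain ⟨b, hb, hF⟩ := IsLocalization.integerNormalization_spec
    (nonZeroDivisors (Algebra.adjoin k {g})) (minpoly k⟮g⟯ f)
  set F₁ := IsLocalization.integerNormalization
    (nonZeroDivisors (Algebra.adjoin k {g})) (minpoly k⟮g⟯ f)
  let e : k[X] →+* Algebra.adjoin k {g} :=
    ((aeval (⟨g, Algebra.self_mem_adjoin_singleton k g⟩ : Algebra.adjoin k {g})) :
      k[X] →ₐ[k] Algebra.adjoin k {g}).toRingHom
  have he : ∀ R, ((e R : Algebra.adjoin k {g}) : K) = aeval g R := by
    intro R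
    have := aeval_algebraMap_apply K (⟨g, Algebra.self_mem_adjoin_singleton k g⟩ : Algebra.adjoin k {g}) R
    exact this.symm
  have hes : Function.Surjective e := by
    rintro ⟨z, hz⟩
    rw [Algebra.adjoin_singleton_eq_range_aeval] at hz
    obtain ⟨R, hR⟩ := hz
    exact ⟨R, Subtype.ext ((he R).trans hR)⟩
  obtain ⟨F, hFF⟩ := map_surjective e hes F₁
  have hb0 : (algebraMap (Algebra.adjoin k {g}) k⟮g⟯) b ≠ 0 := by
    have := nonZeroDivisors.ne_zero hb
    simpa using this
  rw [← algebraMap_smul k⟮g⟯ b, smul_eq_C_mul, ← hFF, Polynomial.map_map] at hF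
  have h1 : (algebraMap k⟮g⟯ K).comp ((algebraMap (Algebra.adjoin k {g}) k⟮g⟯).comp e) =
      (aeval g : k[X] →ₐ[k] K).toRingHom := by
    ext R
    · simp [e]
    · simp [e]
  refine ⟨F, ?_, ?_, ?_⟩
  · have := congrArg (aeval f) hF
    rw [aeval_def, eval₂_map, h1] at this
    simpa using this
  · rintro rfl
    have h2 : minpoly k⟮g⟯ f ≠ 0 := minpoly.ne_zero (Algebra.IsIntegral.isIntegral f)
    simp only [Polynomial.map_zero] at hF
    have := mul_ne_zero (C_ne_zero.2 hb0) h2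
    exact this hF.symm
  · intro y hy
    have := congrArg (aeval y) hF
    rw [aeval_def, eval₂_map, IsScalarTower.algebraMap_eq k⟮g⟯ K, RingHom.comp_assoc, h1, hy] at this
    rw [map_mul, aeval_C, eq_comm, mul_eq_zero] at this
    rcases this with h | h
    · exact absurd ((map_eq_zero _).1 h) hb0
    · exact h

theorem aux_alg_unique {k E : Type*} [Field k] [Field E] [Algebra k E] {m : ℕ} (hm : 0 < m)
    {g a c a' c' : E} (hg : Transcendental k g) (ha0 : a ≠ 0)
    (ha : IsAlgebraic k a) (hc : IsAlgebraic k c) (ha' : IsAlgebraic k a') (hc' : IsAlgebraic k c')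
    (h : a * (1 + c * g) ^ m = a' * (1 + c' * g) ^ m) : a = a' ∧ c = c' := by
  have h1 : ∀ x : E, x ≠ 0 → ∀ y : E, IsAlgebraic k x → IsAlgebraic k y → x * g ≠ y := by
    intro x hx y hax hay hxy
    apply hg
    have : g = y * x⁻¹ := by rw [← hxy]; field_simp
    rw [this]
    exact hay.mul hax.inv
  have hne : ∀ x : E, IsAlgebraic k x → 1 + x * g ≠ 0 := by
    intro x hx hx1
    by_cases hx0 : x = 0
    · simp [hx0] at hx1
    · exact h1 x hx0 (-1) hx (isAlgebraic_one.neg) (by linear_combination hx1)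
  have hn := hne c' hc'
  set u := (1 + c * g) / (1 + c' * g) with hu
  have hum : u ^ m = a' * a⁻¹ := by
    rw [hu, div_pow, ← div_eq_mul_inv, div_eq_div_iff (pow_ne_zero m hn) ha0, ← h, mul_comm]
  have hua : IsAlgebraic k u := by
    have : IsAlgebraic k (u ^ m) := by rw [hum]; exact ha'.mul ha.inv
    exact this.of_pow hm
  have hu2 : (c - u * c') * g = u - 1 := by
    have : u * (1 + c' * g) = 1 + c * g := by rw [hu, div_mul_cancel₀ _ hn]
    linear_combination -this
  have hcu : c - u * c' = 0 := by
    by_contra hne'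
    exact h1 _ hne' _ (hc.sub (hua.mul hc')) (hua.sub isAlgebraic_one) hu2
  rw [hcu, zero_mul] at hu2
  have hu1 : u = 1 := by linear_combination -hu2
  rw [hu1] at hcu
  have hcc : c = c' := by linear_combination hcu
  refine ⟨?_, hcc⟩
  rw [← hcc] at h
  exact mul_right_cancel₀ (pow_ne_zero m (hne c hc)) h

open Polynomial in
theorem aux_fixed {k K : Type*} [Field k] [Fintype k] [Field K] [Algebra k K]
    (hK : ∀ x : K, IsAlgebraic k x → x ∈ (algebraMap k K).range)
    (x : AlgebraicClosure K) (hx : IsAlgebraic k x)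
    (hfix : ∀ τ : AlgebraicClosure K ≃ₐ[K] AlgebraicClosure K, τ x = x) :
    ∃ a : k, algebraMap k (AlgebraicClosure K) a = x := by
  have hsep : IsSeparable k x := PerfectField.separable_of_irreducible (minpoly.irreducible hx.isIntegral)
  have hsep' : (minpoly K x).Separable := hsep.tower_top K
  have hxi : IsIntegral K x := Algebra.IsIntegral.isIntegral x
  have hcard := card_rootSet_eq_natDegree (K := AlgebraicClosure K) hsep' (IsAlgClosed.splits _)
  have hsub : (minpoly K x).rootSet (AlgebraicClosure K) ⊆ {x} := by
    intro y hy
    have hy2 := aeval_eq_zero_of_mem_rootSet hy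
    obtain ⟨τ, hτ⟩ := minpoly.exists_algEquiv_of_root' (K := K) (L := AlgebraicClosure K) (hxi.isAlgebraic) hy2
    rw [Set.mem_singleton_iff, ← hτ, hfix]
  have hle : (minpoly K x).natDegree ≤ 1 := by
    rw [← hcard, ← Nat.card_eq_fintype_card, Nat.card_coe_set_eq]
    exact (Set.ncard_le_ncard hsub).trans (by simp)
  have hpos := minpoly.natDegree_pos hxi
  have hdeg : (minpoly K x).degree = 1 := by
    rw [degree_eq_natDegree (minpoly.ne_zero hxi)]
    have : (minpoly K x).natDegree = 1 := by omega
    rw [this]; rfl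
  obtain ⟨y, rfl⟩ := minpoly.mem_range_of_degree_eq_one K x hdeg
  obtain ⟨a, rfl⟩ := hK y ((isAlgebraic_algebraMap_iff (algebraMap K (AlgebraicClosure K)).injective).1 hx)
  exact ⟨a, IsScalarTower.algebraMap_apply k K _ a⟩

open Polynomial IntermediateField in
theorem aux_descent {k K : Type} [Field k] [Fintype k] [Field K] [Algebra k K] {S : Set ℕ}
    {m : ℕ} (hm : 0 < m)
    (hK : ∀ x : K, IsAlgebraic k x → x ∈ (algebraMap k K).range) {f g : K}
    (hg : Transcendental k g) [Algebra.IsAlgebraic k⟮g⟯ K]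
    (F : k[X][X])
    (hF : ∀ y : AlgebraicClosure K,
        F.eval₂ ((algebraMap K (AlgebraicClosure K)).comp (aeval g : k[X] →ₐ[k] K).toRingHom) y = 0 →
        aeval y (minpoly k⟮g⟯ f) = 0)
    (a c : AlgebraicClosure k) (ha0 : a ≠ 0) (hc0 : c ≠ 0)
    (ha : PrimaryOutside S a) (hc : PrimaryOutside S c)
    (H : F.eval₂ (mapRingHom (algebraMap k (AlgebraicClosure k))) (C a * (1 + C c * X) ^ m) = 0) :
    ∃ a c : k, a ≠ 0 ∧ c ≠ 0 ∧ PrimaryOutside S a ∧ PrimaryOutside S c ∧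
      f = algebraMap k K a * (1 + algebraMap k K c * g) ^ m := by
  let Ω := AlgebraicClosure K
  let ε : AlgebraicClosure k →ₐ[k] Ω := IsAlgClosed.lift
  let gΩ : Ω := algebraMap K Ω g
  have hgΩ : Transcendental k gΩ := by
    rw [Transcendental, isAlgebraic_algebraMap_iff (algebraMap K Ω).injective]; exact hg
  -- evaluate `H` at `g`
  have h1 : F.eval₂ ((algebraMap K Ω).comp (aeval g : k[X] →ₐ[k] K).toRingHom)
      (ε a * (1 + ε c * gΩ) ^ m) = 0 := by
    have h2 := congrArg (eval₂RingHom (ε : AlgebraicClosure k →+* Ω) gΩ) H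
    rw [hom_eval₂, map_zero] at h2
    have h3 : (eval₂RingHom (ε : AlgebraicClosure k →+* Ω) gΩ).comp
        (mapRingHom (algebraMap k (AlgebraicClosure k))) =
        (algebraMap K Ω).comp (aeval g : k[X] →ₐ[k] K).toRingHom := by
      ext R
      · simp [← IsScalarTower.algebraMap_apply]
      · simp [gΩ]
    rw [h3] at h2
    simp only [map_mul, map_pow, map_add, map_one] at h2
    simpa using h2
  have h2 := hF _ h1
  have : Algebra.IsAlgebraic k⟮g⟯ Ω := Algebra.IsAlgebraic.trans k⟮g⟯ K Ω
  have : IsAlgClosure k⟮g⟯ Ω := ⟨inferInstance, inferInstance⟩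
  have : Normal k⟮g⟯ Ω := IsAlgClosure.normal _ _
  rw [← minpoly.algebraMap_eq (B' := Ω) (algebraMap K Ω).injective f] at h2
  obtain ⟨σ, hσ⟩ := minpoly.exists_algEquiv_of_root (K := k⟮g⟯) (L := Ω)
    (Algebra.IsAlgebraic.isAlgebraic (algebraMap K Ω f)) h2
  have hσg : σ gΩ = gΩ := by
    have := σ.commutes (AdjoinSimple.gen k g)
    have e : algebraMap k⟮g⟯ Ω (AdjoinSimple.gen k g) = gΩ := by
      rw [IsScalarTower.algebraMap_apply k⟮g⟯ K Ω]; simp [gΩ]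
    rwa [e] at this
  let σε : AlgebraicClosure k →+* Ω := (σ : Ω →+* Ω).comp (ε : AlgebraicClosure k →+* Ω)
  have hσε : ∀ x, IsAlgebraic k (σε x) := by
    intro x
    let σ' : Ω →ₐ[k] Ω := (σ.toAlgHom).restrictScalars k
    have : IsAlgebraic k x := Algebra.IsAlgebraic.isAlgebraic x
    exact (this.algHom ε).algHom σ'
  set a' := σε a with ha'
  set c' := σε c with hc'
  have ha'0 : a' ≠ 0 := by rw [ha', _root_.map_ne_zero]; exact ha0
  have hc'0 : c' ≠ 0 := by rw [hc', _root_.map_ne_zero]; exact hc0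
  have hfa : a' * (1 + c' * gΩ) ^ m = algebraMap K Ω f := by
    rw [← hσ, map_mul, map_pow, map_add, map_mul, map_one, hσg]; rfl
  have hτ : ∀ τ : Ω ≃ₐ[K] Ω, τ a' = a' ∧ τ c' = c' := by
    intro τ
    have h3 : τ a' * (1 + τ c' * gΩ) ^ m = algebraMap K Ω f := by
      have h4 := congrArg τ hfa
      rw [τ.commutes, map_mul, map_pow, map_add, map_mul, map_one] at h4
      have h5 : τ gΩ = gΩ := τ.commutes g
      rwa [h5] at h4
    let τ' : Ω →ₐ[k] Ω := (τ.toAlgHom).restrictScalars k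
    exact aux_alg_unique hm hgΩ (by simpa using ha'0)
      ((hσε a).algHom τ') ((hσε c).algHom τ') (hσε a) (hσε c) (h3.trans hfa.symm)
  obtain ⟨a₁, ha₁⟩ := aux_fixed hK a' (hσε a) (fun τ => (hτ τ).1)
  obtain ⟨c₁, hc₁⟩ := aux_fixed hK c' (hσε c) (fun τ => (hτ τ).2)
  have pa : PrimaryOutside S a' := (aux_primary_iff (σε : AlgebraicClosure k →* Ω) σε.injective a).2 ha
  have pc : PrimaryOutside S c' := (aux_primary_iff (σε : AlgebraicClosure k →* Ω) σε.injective c).2 hc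
  refine ⟨a₁, c₁, ?_, ?_, ?_, ?_, ?_⟩
  · rintro rfl; exact ha'0 (by rw [← ha₁, map_zero])
  · rintro rfl; exact hc'0 (by rw [← hc₁, map_zero])
  · rw [← aux_primary_iff (algebraMap k Ω : k →* Ω) (algebraMap k Ω).injective]
    exact ha₁ ▸ pa
  · rw [← aux_primary_iff (algebraMap k Ω : k →* Ω) (algebraMap k Ω).injective]
    exact hc₁ ▸ pc
  · apply (algebraMap K Ω).injective
    rw [← hfa, ← ha₁, ← hc₁]
    simp only [map_mul, map_pow, map_add, map_one, ← IsScalarTower.algebraMap_apply, gΩ]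
    rfl

theorem aux_alg {k K : Type} [Field k] [Field K] [Algebra k K]
    (hK : IsFunctionFieldOneVar k K) {g : K} (hg : Transcendental k g) :
    Algebra.IsAlgebraic (IntermediateField.adjoin k {g}) K := by
  obtain ⟨⟨t, ht, hfin⟩, -⟩ := hK
  have ht' : IsTranscendenceBasis k (fun _ : Unit => t) := by
    rw [isTranscendenceBasis_iff_algebraicIndependent_isAlgebraic]
    refine ⟨algebraicIndependent_unique_type_iff.2 ht, ?_⟩
    rw [Set.range_const]
    have : Algebra.IsAlgebraic (IntermediateField.adjoin k {t}) K := inferInstance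
    exact IntermediateField.isAlgebraic_adjoin_iff_top.1 this
  have hg' : IsTranscendenceBasis k (fun _ : Unit => g) := by
    have hi : AlgebraicIndependent k (fun _ : Unit => g) :=
      algebraicIndependent_unique_type_iff.2 hg
    exact hi.isTranscendenceBasis_of_trdeg_le_of_finite ht'.cardinalMk_eq_trdeg.ge
  have := hg'.isAlgebraic_field
  rwa [Set.range_const] at this

open Polynomial in
/-- lifting elements of `Ω` algebraic over `k` to `k̄` -/
theorem aux_lift {k Ω : Type*} [Field k] [Field Ω] [IsAlgClosed Ω] (j : k →+* Ω) :
    ∃ ι : AlgebraicClosure k →+* Ω, ι.comp (algebraMap k _) = j ∧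
      ∀ (P : k[X]) (x : Ω), P ≠ 0 → P.eval₂ j x = 0 → ∃ y, ι y = x := by
  let := j.toAlgebra
  let ι : AlgebraicClosure k →ₐ[k] Ω := IsAlgClosed.lift
  have hι : (ι : AlgebraicClosure k →+* Ω).comp (algebraMap k _) = j := ι.comp_algebraMap
  refine ⟨ι, hι, ?_⟩
  intro P x hP hx
  have hs : (P.map (algebraMap k (AlgebraicClosure k))).Splits := IsAlgClosed.splits _
  have := hs.mem_range_of_isRoot (i := (ι : AlgebraicClosure k →+* Ω)) (x := x)
    (Polynomial.map_ne_zero hP) (by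
      rw [Polynomial.map_map, hι, IsRoot.def, eval_map]; exact hx)
  exact this

open Polynomial in
theorem aux_lift_primary {k Ω : Type*} [Field k] [Field Ω] (j : k →+* Ω)
    {S : Set ℕ} {x : Ω} (hx : PrimaryOutside S x) : ∃ P : k[X], P ≠ 0 ∧ P.eval₂ j x = 0 := by
  have h := orderOf_pos_iff.2 hx.1
  refine ⟨X ^ orderOf x - C 1, X_pow_sub_C_ne_zero h 1, ?_⟩
  simp [pow_orderOf_eq_one]

open Polynomial in
/-- Integrality at a good place. -/
theorem aux_mem_place {k K : Type*} [Field k] [Field K] [Algebra k K] {f g : K}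
    {P : k[X]} (F : k[X][X])
    (hF : F.eval₂ (aeval g : k[X] →ₐ[k] K).toRingHom f = 0)
    (O : ValuationSubring K) (hk : ∀ c : k, algebraMap k K c ∈ O) (hg : g ∈ O)
    (hP : aeval g P ∈ O.nonunits) (hcop : IsCoprime P F.leadingCoeff) : f ∈ O := by
  have hu := aux_place_coprime hcop O hk hg hP
  rw [ValuationSubring.mem_nonunits_iff, not_lt] at hu
  by_contra hf
  have hf1 : 1 < O.valuation f := by
    rw [← not_le, O.valuation_le_one_iff]; exact hf
  have hmem : ∀ R : k[X], O.valuation (aeval g R) ≤ 1 := by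
    intro R
    rw [O.valuation_le_one_iff, aeval_eq_sum_range]
    refine sum_mem fun i _ => ?_
    rw [Algebra.smul_def]
    exact mul_mem (hk _) (pow_mem hg _)
  rw [eval₂_eq_sum_range, Finset.sum_range_succ] at hF
  have hlt : O.valuation (∑ x ∈ Finset.range F.natDegree,
      (aeval g : k[X] →ₐ[k] K).toRingHom (F.coeff x) * f ^ x) < O.valuation f ^ F.natDegree := by
    apply Valuation.map_sum_lt
    · exact pow_ne_zero _ (by intro h; rw [h] at hf1; exact absurd hf1 (by simp))
    · intro i hi
      rw [map_mul, map_pow]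
      calc _ ≤ 1 * O.valuation f ^ i := by gcongr; exact hmem _
        _ = O.valuation f ^ i := one_mul _
        _ < _ := pow_lt_pow_right₀ hf1 (Finset.mem_range.1 hi)
  have heq := eq_neg_of_add_eq_zero_left hF
  rw [heq, Valuation.map_neg, map_mul, map_pow] at hlt
  have : O.valuation f ^ F.natDegree ≤
      O.valuation ((aeval g : k[X] →ₐ[k] K).toRingHom (F.coeff F.natDegree)) *
        O.valuation f ^ F.natDegree := le_mul_of_one_le_left' hu
  exact absurd hlt (not_lt.2 this)

open Polynomial in
theorem aux_point {k K : Type} [Field k] [Field K] [Algebra k K] {f g : K} {S : Set ℕ} {m : ℕ}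
    {P : k[X]} (hP0 : P ≠ 0) (F : k[X][X])
    (hF : F.eval₂ (aeval g : k[X] →ₐ[k] K).toRingHom f = 0)
    (O : ValuationSubring K) (hk : ∀ c : k, algebraMap k K c ∈ O) (hg : g ∈ O)
    (hP : aeval g P ∈ O.nonunits) (hf : f ∈ O)
    (hex : ∃ a c : AlgebraicClosure (IsLocalRing.ResidueField ↥O),
          a ≠ 0 ∧ c ≠ 0 ∧ PrimaryOutside S a ∧ PrimaryOutside S c ∧
          algebraMap (IsLocalRing.ResidueField ↥O) (AlgebraicClosure (IsLocalRing.ResidueField ↥O))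
              (IsLocalRing.residue ↥O ⟨f, hf⟩) =
            a * (1 + c * algebraMap (IsLocalRing.ResidueField ↥O)
              (AlgebraicClosure (IsLocalRing.ResidueField ↥O))
              (IsLocalRing.residue ↥O ⟨g, hg⟩)) ^ m) :
    ∃ a c β : AlgebraicClosure k, a ≠ 0 ∧ c ≠ 0 ∧ PrimaryOutside S a ∧ PrimaryOutside S c ∧
      aeval β P = 0 ∧
      F.eval₂ (aeval β : k[X] →ₐ[k] AlgebraicClosure k).toRingHom (a * (1 + c * β) ^ m) = 0 := by
  obtain ⟨a, c, ha0, hc0, ha, hc, hfg⟩ := hex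
  let Ω := AlgebraicClosure (IsLocalRing.ResidueField ↥O)
  let θ : O →+* Ω := (algebraMap (IsLocalRing.ResidueField ↥O) Ω).comp (IsLocalRing.residue ↥O)
  let kO : k →+* O := (algebraMap k K).codRestrict O.toSubring hk
  let ev : k[X] →+* O := eval₂RingHom kO ⟨g, hg⟩
  have hev : (O.subtype).comp ev = (aeval g : k[X] →ₐ[k] K).toRingHom := by
    ext x
    · simp [ev, kO]
    · simp [ev]
  let j : k →+* Ω := θ.comp kO
  obtain ⟨ι, hι, hlift⟩ := aux_lift j
  have hgP : P.eval₂ j (θ ⟨g, hg⟩) = 0 := by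
    rw [← hom_eval₂]
    have h1 : (P.eval₂ kO ⟨g, hg⟩) ∈ IsLocalRing.maximalIdeal O := by
      rw [← ValuationSubring.coe_mem_nonunits_iff]
      have := congrArg (fun φ => φ P) hev
      have h2 : ((P.eval₂ kO ⟨g, hg⟩ : O) : K) = aeval g P := this
      rw [h2]; exact hP
    change algebraMap _ Ω (IsLocalRing.residue O _) = 0
    rw [(IsLocalRing.residue_eq_zero_iff _).2 h1, map_zero]
  obtain ⟨β, hβ⟩ := hlift P _ hP0 hgP
  obtain ⟨Pa, hPa0, hPa⟩ := aux_lift_primary j ha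
  obtain ⟨Pc, hPc0, hPc⟩ := aux_lift_primary j hc
  obtain ⟨a, rfl⟩ := hlift Pa _ hPa0 hPa
  obtain ⟨c, rfl⟩ := hlift Pc _ hPc0 hPc
  refine ⟨a, c, β, ?_, ?_, ?_, ?_, ?_, ?_⟩
  · rintro rfl; exact ha0 (map_zero _)
  · rintro rfl; exact hc0 (map_zero _)
  · exact (aux_primary_iff (ι : AlgebraicClosure k →* Ω) ι.injective a).1 ha
  · exact (aux_primary_iff (ι : AlgebraicClosure k →* Ω) ι.injective c).1 hc
  · apply ι.injective
    rw [aeval_def, hom_eval₂, hι, hβ, hgP, map_zero]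
  · apply ι.injective
    have hcomp : ι.comp (aeval β : k[X] →ₐ[k] AlgebraicClosure k).toRingHom = θ.comp ev := by
      ext x
      · have := congrArg (fun φ => φ x) hι
        simpa [ev, j] using this
      · simpa [ev] using hβ
    rw [hom_eval₂, hcomp, map_zero]
    have hf' : ι (a * (1 + c * β) ^ m) = θ ⟨f, hf⟩ := by
      rw [map_mul, map_pow, map_add, map_mul, map_one, hβ]
      exact hfg.symm
    rw [hf', ← hom_eval₂]
    have h0 : F.eval₂ ev ⟨f, hf⟩ = 0 := by
      apply Subtype.val_injective
      have := hom_eval₂ F ev O.subtype ⟨f, hf⟩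
      rw [hev] at this
      exact this.trans hF
    rw [h0, map_zero]

open Polynomial in
theorem aux_finite_periodic {k E : Type*} [Field k] [Fintype k] [Field E] [Algebra k E]
    (D : ℕ) (hD : D ≠ 0) :
    {x : E | Function.IsPeriodicPt (FiniteField.frobeniusAlgHom k E) D x}.Finite := by
  have h0 : (X ^ (Fintype.card k) ^ D - X : E[X]) ≠ 0 :=
    FiniteField.X_pow_card_pow_sub_X_ne_zero _ hD Fintype.one_lt_card
  refine ((X ^ (Fintype.card k) ^ D - X : E[X]).rootSet_finite E).subset ?_
  intro x hx
  rw [Set.mem_setOf_eq, Function.IsPeriodicPt, Function.IsFixedPt,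
    FiniteField.coe_frobeniusAlgHom, pow_iterate] at hx
  rw [mem_rootSet]
  refine ⟨h0, ?_⟩
  have hx' : x ^ (Fintype.card k) ^ D = x := hx
  simp [hx']

/-- **Definition/Proposition 3.12 (ii), combined with the descent of 3.12 (i)
(`Q̄_{1,Σ}^{(m)} ⟹ P_Σ^{(m)}`).** Let `K` be a function field of one variable over a
finite field `k` of cardinality `q` and characteristic `p`, `S` a `k`-large set of primes
and `m ≥ 1`. If `f, g ∈ K ∖ k` are such that for all but finitely many places `O` of `K`
with `f, g ∈ O` one has `f(O) = a·(1 + c·g(O))^m` in an algebraic closure of the residue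
field for some nonzero `a, c` of `S'`-primary order, then `f = a·(1 + c·g)^m` for some
`a, c ∈ k^×` of `S'`-primary order. -/
theorem prop_3_12_ii
    (m : ℕ) (hm : 0 < m)
    (k K : Type) [Field k] [Fintype k] [Field K] [Algebra k K]
    (p q : ℕ) (hp : p.Prime) [CharP k p] (hq : q = Fintype.card k)
    (hK : IsFunctionFieldOneVar k K)
    (S : Set ℕ) (hlarge : IsLargeFor q p S)
    (f g : K) (hf : f ∉ (algebraMap k K).range) (hg : g ∉ (algebraMap k K).range)
    (hQ : {O : ValuationSubring K |
      (∀ c : k, algebraMap k K c ∈ O) ∧ O ≠ ⊤ ∧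
      ∃ (hfO : f ∈ O) (hgO : g ∈ O),
        ¬ ∃ a c : AlgebraicClosure (IsLocalRing.ResidueField ↥O),
          a ≠ 0 ∧ c ≠ 0 ∧ PrimaryOutside S a ∧ PrimaryOutside S c ∧
          algebraMap (IsLocalRing.ResidueField ↥O) (AlgebraicClosure (IsLocalRing.ResidueField ↥O))
              (IsLocalRing.residue ↥O ⟨f, hfO⟩) =
            a * (1 + c * algebraMap (IsLocalRing.ResidueField ↥O)
              (AlgebraicClosure (IsLocalRing.ResidueField ↥O))
              (IsLocalRing.residue ↥O ⟨g, hgO⟩)) ^ m}.Finite) :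
    ∃ a c : k, a ≠ 0 ∧ c ≠ 0 ∧ PrimaryOutside S a ∧ PrimaryOutside S c ∧
      f = algebraMap k K a * (1 + algebraMap k K c * g) ^ m := by
  classical
  have hgt : Transcendental k g := fun h => hg (hK.2 g h)
  have halg : Algebra.IsAlgebraic (IntermediateField.adjoin k {g}) K := aux_alg hK hgt
  obtain ⟨l, N₀, hl, hT₀⟩ := hlarge
  obtain ⟨N, hN⟩ : ∃ N, N = N₀ + 1 := ⟨_, rfl⟩
  have hN0 : N ≠ 0 := by omega
  have hT : ∀ ℓ ∈ {ℓ : ℕ | ℓ.Prime ∧ ℓ ∉ S}, ℓ.Prime → ℓ ≠ p → ∀ j : ℕ, 1 ≤ j →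
      ¬ l ^ N ∣ orderOf ((q : ZMod (ℓ ^ j))) := fun ℓ h1 h2 h3 j hj h4 =>
    hT₀ ℓ h1 h2 h3 j hj ((pow_dvd_pow l (by omega)).trans h4)
  obtain ⟨F, hF, hF0, hFmin⟩ := aux_exists_F (k := k) (g := g) f
  set d := F.natDegree with hd
  have hh0 : F.leadingCoeff ≠ 0 := Polynomial.leadingCoeff_ne_zero.2 hF0
  choose P hPirr hPdeg using fun M : ℕ =>
    aux_exists_irreducible k (l ^ M) (pow_ne_zero M hl.ne_zero)
  choose O hOk hOg hOP using fun M : ℕ => aux_exists_place hgt (hPirr M)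
  have hOtop : ∀ M, O M ≠ ⊤ := by
    intro M htop
    have h1 := hOP M
    have h0 : Polynomial.aeval g (P M) ≠ 0 := by
      intro h
      exact (hPirr M).ne_zero (transcendental_iff_injective.1 hgt (by rw [h, map_zero]))
    rw [ValuationSubring.mem_nonunits_iff] at h1
    have h2 : (Polynomial.aeval g (P M))⁻¹ ∈ O M := by rw [htop]; trivial
    rw [← ValuationSubring.valuation_le_one_iff, map_inv₀] at h2
    have h3 : 0 < (O M).valuation (Polynomial.aeval g (P M)) := by
      rw [zero_lt_iff, Ne, map_eq_zero]; exact h0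
    have h4 := (one_lt_inv₀ h3).2 h1
    exact absurd h2 (not_le.2 h4)
  have hOinj : Function.Injective O := by
    intro M M' hMM
    by_contra hne
    have hcop : IsCoprime (P M) (P M') := by
      rcases (dvd_or_isCoprime (P M) ((P M')) (hPirr M)).symm with h | h
      · exact h
      · exfalso
        have := ((hPirr M).associated_of_dvd (hPirr M') h)
        have := Polynomial.natDegree_eq_of_degree_eq (Polynomial.degree_eq_degree_of_associated this)
        rw [hPdeg, hPdeg] at this
        exact hne (Nat.pow_right_injective hl.two_le this)
    refine aux_place_coprime hcop (O M) (hOk M) (hOg M) (hOP M) ?_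
    rw [hMM]; exact hOP M'
  set D := l ^ N * d.factorial with hD
  have hD0 : D ≠ 0 := Nat.mul_ne_zero (pow_ne_zero _ hl.ne_zero) (Nat.factorial_ne_zero _)
  set Φ := FiniteField.frobeniusAlgHom k (AlgebraicClosure k) with hΦ
  -- the good set
  set Bad := _
  have hBad : Set.Finite Bad := hQ
  set Gd : Set ℕ := {M | (m * l ^ N < l ^ M ∧ F.leadingCoeff.natDegree < l ^ M) ∧ O M ∉ Bad} with hGd
  have hGdinf : Gd.Infinite := by
    have h1 : (O ⁻¹' Bad).Finite := hBad.preimage hOinj.injOn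
    have h2 : {M | ¬ (m * l ^ N < l ^ M ∧ F.leadingCoeff.natDegree < l ^ M)}.Finite := by
      refine (Set.finite_Iic (m * l ^ N + F.leadingCoeff.natDegree)).subset ?_
      intro M hM
      by_contra hcon
      apply hM
      have h3 := Nat.lt_pow_self hl.one_lt (n := M)
      simp only [Set.mem_Iic, not_le] at hcon
      constructor <;> omega
    have h3 : Gdᶜ.Finite := by
      refine (h2.union h1).subset ?_
      intro M hM
      by_contra hcon
      apply hM
      simp only [Set.mem_union, Set.mem_setOf_eq, Set.mem_preimage, not_or, not_not] at hcon
      exact hcon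
    exact Set.infinite_of_finite_compl h3
  have hpt : ∀ M ∈ Gd, ∃ a c β : AlgebraicClosure k, (a ≠ 0 ∧ c ≠ 0 ∧ PrimaryOutside S a ∧
      PrimaryOutside S c ∧ Function.IsPeriodicPt Φ D a ∧ Function.IsPeriodicPt Φ D c) ∧
      Function.minimalPeriod Φ β = l ^ M ∧
      F.eval₂ (Polynomial.aeval β : Polynomial k →ₐ[k] AlgebraicClosure k).toRingHom
        (a * (1 + c * β) ^ m) = 0 := by
    rintro M ⟨⟨hM1, hM2⟩, hM3⟩
    have hcop : IsCoprime (P M) F.leadingCoeff := by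
      rcases (dvd_or_isCoprime (P M) (F.leadingCoeff) (hPirr M)).symm with h | h
      · exact h
      · exfalso
        have := Polynomial.natDegree_le_of_dvd h hh0
        rw [hPdeg] at this
        omega
    have hfO : f ∈ O M := aux_mem_place F hF (O M) (hOk M) (hOg M) (hOP M) hcop
    have hex := not_not.1 fun hcon => hM3 ⟨hOk M, hOtop M, hfO, hOg M, hcon⟩
    obtain ⟨a, c, β, ha0, hc0, ha, hc, hβ, hFβ⟩ :=
      aux_point (hPirr M).ne_zero F hF (O M) (hOk M) (hOg M) (hOP M) hfO hex
    have hper := aux_minimalPeriod (hPirr M) hβ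
    rw [hPdeg] at hper
    refine ⟨a, c, β, ?_, hper, hFβ⟩
    obtain ⟨r₁, hr₁, hlr₁, hra⟩ := aux_period hp hq hl hT hN0 a ha
    obtain ⟨r₂, hr₂, hlr₂, hrc⟩ := aux_period hp hq hl hT hN0 c hc
    have hβM : Function.IsPeriodicPt Φ (l ^ M) β := hper ▸ Function.isPeriodicPt_minimalPeriod Φ β
    have hcore := aux_core (k := k) (d := d) (N := N) (M := M) (r := r₁.lcm r₂) hm hl β a c ha0 hc0
      hper (Nat.lcm_pos hr₁ hr₂)
      (fun h => (aux_pow_dvd_lcm hl hr₁.ne' hr₂.ne' h).elim hlr₁ hlr₂)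
      (hra.trans_dvd (Nat.dvd_lcm_left _ _)) (hrc.trans_dvd (Nat.dvd_lcm_right _ _)) hM1
      (F.map (Polynomial.aeval β : Polynomial k →ₐ[k] AlgebraicClosure k).toRingHom)
      (by
        intro h
        have h1 := congrArg (fun G => Polynomial.coeff G F.natDegree) h
        simp only [Polynomial.coeff_map, Polynomial.coeff_zero] at h1
        have h2 : Polynomial.aeval β F.leadingCoeff = 0 := h1
        obtain ⟨u, v, huv⟩ := hcop
        have h3 := congrArg (Polynomial.aeval β) huv
        rw [map_add, map_mul, map_mul, hβ, h2, map_one] at h3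
        simp at h3)
      Polynomial.natDegree_map_le
      (by
        intro i
        rw [Polynomial.coeff_map, Function.IsPeriodicPt, Function.IsFixedPt, ← AlgHom.coe_pow]
        change (Φ ^ l ^ M) (Polynomial.aeval β (F.coeff i)) = Polynomial.aeval β (F.coeff i)
        rw [← Polynomial.aeval_algHom_apply]
        congr 2
        rw [AlgHom.coe_pow]
        exact hβM)
      (by rw [Polynomial.IsRoot.def, Polynomial.eval_map]; exact hFβ)
    exact ⟨ha0, hc0, ha, hc, hcore.1, hcore.2⟩
  let H : AlgebraicClosure k × AlgebraicClosure k → Polynomial (AlgebraicClosure k) := fun x =>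
    F.eval₂ (Polynomial.mapRingHom (algebraMap k (AlgebraicClosure k)))
      (Polynomial.C x.1 * (1 + Polynomial.C x.2 * Polynomial.X) ^ m)
  have hHev : ∀ x β, (H x).eval β =
      F.eval₂ (Polynomial.aeval β : Polynomial k →ₐ[k] AlgebraicClosure k).toRingHom
        (x.1 * (1 + x.2 * β) ^ m) := by
    intro x β
    have h2 := Polynomial.hom_eval₂ F (Polynomial.mapRingHom (algebraMap k (AlgebraicClosure k)))
      (Polynomial.evalRingHom β) (Polynomial.C x.1 * (1 + Polynomial.C x.2 * Polynomial.X) ^ m)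
    have h3 : (Polynomial.evalRingHom β).comp
        (Polynomial.mapRingHom (algebraMap k (AlgebraicClosure k))) =
        (Polynomial.aeval β : Polynomial k →ₐ[k] AlgebraicClosure k).toRingHom := by
      ext R
      · simp
      · simp
    rw [h3] at h2
    refine h2.trans ?_
    congr 1
    simp
  by_cases hgood : ∃ x : AlgebraicClosure k × AlgebraicClosure k, x.1 ≠ 0 ∧ x.2 ≠ 0 ∧
      PrimaryOutside S x.1 ∧ PrimaryOutside S x.2 ∧ H x = 0
  · obtain ⟨x, h1, h2, h3, h4, h5⟩ := hgood
    exact aux_descent hm hK.2 hgt F hFmin x.1 x.2 h1 h2 h3 h4 h5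
  · exfalso
    choose! a c β hac hβ hFβ using hpt
    have hfin := aux_finite_periodic (k := k) (E := AlgebraicClosure k) D hD0
    set Per := {x : AlgebraicClosure k | Function.IsPeriodicPt Φ D x} with hPer
    have hB : (⋃ x ∈ Per ×ˢ Per, (H x).rootSet (AlgebraicClosure k)).Finite :=
      (hfin.prod hfin).biUnion fun x _ => Polynomial.rootSet_finite _ _
    have hinj : Set.InjOn β Gd := by
      intro M hM M' hM' h
      have h1 := hβ M hM
      rw [h, hβ M' hM'] at h1
      exact (Nat.pow_right_injective hl.two_le h1).symm
    refine Set.infinite_of_injOn_mapsTo hinj ?_ hGdinf hB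
    intro M hM
    obtain ⟨h1, h2, h3, h4, h5, h6⟩ := hac M hM
    refine Set.mem_biUnion (x := (a M, c M)) ⟨h5, h6⟩ ?_
    rw [Polynomial.mem_rootSet]
    refine ⟨fun h0 => hgood ⟨(a M, c M), h1, h2, h3, h4, h0⟩, ?_⟩
    rw [Polynomial.coe_aeval_eq_eval, hHev]
    exact hFβ M hM
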